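/- Fix J, p ∈ ℕ and d ∈ ℝ, let P be a polynomial in 3 real variables that is homogeneous of degree J and harmonic, and let H : EuclideanSpace ℝ (Fin 3) → ℝ be its polynomial function. Define u on ℝ³ ∖ {0} as follows: if (d+2−J)·(d+3+J) ≠ 0, set u(x) = ‖x‖^{d+2−J}·H(x)·∑_{i=0}^{p} ∑_{n=0}^{i} (−1)^i · (p!/(p−i)!) · (log‖x‖)^{p−i} / ( (d+2−J)^{n+1}·(d+3+J)^{i−n+1} ); if d+2 = J or d+2 = −(J+1), set u(x) = ‖x‖^{d+2−J}·H(x)·∑_{i=0}^{p} (−1)^i · (p!/(p+1−i)!) · (log‖x‖)^{p+1−i} / (2d+5)^{i+1}. Then for every x ≠ 0, Δu(x) = ‖x‖^{d−J}·(log‖x‖)ᵖ·H(x). (This verifies, in spacetime dimension 3, that the operator □⁻¹ defined in Appendix D by □⁻¹[ r^d Y_{JM}(x/r)(log r)^p ] = r^{d+2} Y_{JM}(x/r)(log r)^p · D^{(p)}(d+2, J, r) is a right inverse of the Laplacian.) -/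

import Mathlib

/-- The Laplacian of `f : EuclideanSpace ℝ (Fin 3) → ℝ` at `x`: the sum over the
standard coordinate directions of the second directional derivatives of `f` at `x`. -/
noncomputable def laplacian {D : ℕ} (f : EuclideanSpace ℝ (Fin D) → ℝ)
    (x : EuclideanSpace ℝ (Fin D)) : ℝ :=
  ∑ i : Fin D,
    fderiv ℝ (fun y => fderiv ℝ f y (EuclideanSpace.single i (1 : ℝ))) x
      (EuclideanSpace.single i (1 : ℝ))

open MvPolynomial in
lemma bx_poly (R : MvPolynomial (Fin 3) ℝ) (x : EuclideanSpace ℝ (Fin 3)) :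
    HasFDerivAt (fun y : EuclideanSpace ℝ (Fin 3) => eval (fun i => y i) R)
      (∑ i : Fin 3, eval (fun i => x i) (pderiv i R) •
        (EuclideanSpace.proj i : EuclideanSpace ℝ (Fin 3) →L[ℝ] ℝ)) x := by
  induction R using MvPolynomial.induction_on with
  | C a => simpa using hasFDerivAt_const a x
  | add p q hp hq =>
    simp only [map_add, add_smul, Finset.sum_add_distrib]
    exact hp.add hq
  | mul_X p n hp =>
    have h1 := hp.mul (EuclideanSpace.proj n : EuclideanSpace ℝ (Fin 3) →L[ℝ] ℝ).hasFDerivAt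
    simp only [eval_mul, eval_X]
    refine h1.congr_fderiv ?_
    ext v
    simp [Derivation.leibniz, pderiv_X, Pi.single_apply, Fin.sum_univ_three]
    fin_cases n <;> simp <;> ring

lemma bx_log (x : EuclideanSpace ℝ (Fin 3)) (hx : x ≠ 0) :
    HasFDerivAt (fun y : EuclideanSpace ℝ (Fin 3) => Real.log ‖y‖)
      ((‖x‖ ^ 2)⁻¹ • innerSL ℝ x) x := by
  have h0 : ‖x‖ ≠ 0 := norm_ne_zero_iff.mpr hx
  have h1 := (hasStrictFDerivAt_norm_sq x).hasFDerivAt.log (pow_ne_zero 2 h0)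
  have h2 := h1.const_mul (1 / 2 : ℝ)
  have h3 : (fun y : EuclideanSpace ℝ (Fin 3) => Real.log ‖y‖) =
      fun y => (1 / 2 : ℝ) * Real.log (‖y‖ ^ 2) := by
    ext y
    rw [Real.log_pow]; push_cast; ring
  rw [h3]
  refine h2.congr_fderiv ?_
  ext v
  simp
  ring

open Polynomial in
lemma bx_step (α : ℝ) (Q : ℝ[X]) (R : MvPolynomial (Fin 3) ℝ)
    (x : EuclideanSpace ℝ (Fin 3)) (hx : x ≠ 0) :
    HasFDerivAt (fun y : EuclideanSpace ℝ (Fin 3) =>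
      ‖y‖ ^ α * MvPolynomial.eval (fun i => y i) R * Q.eval (Real.log ‖y‖))
      ((‖x‖ ^ (α - 2) * (C α * Q + derivative Q).eval (Real.log ‖x‖)
          * MvPolynomial.eval (fun i => x i) R) • innerSL ℝ x
        + (‖x‖ ^ α * Q.eval (Real.log ‖x‖)) •
          ∑ i : Fin 3, MvPolynomial.eval (fun i => x i) (MvPolynomial.pderiv i R) •
        (EuclideanSpace.proj i : EuclideanSpace ℝ (Fin 3) →L[ℝ] ℝ)) x := by
  have h0 : 0 < ‖x‖ := norm_pos_iff.mpr hx
  have hL := bx_log x hx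
  have he : HasDerivAt (fun t : ℝ => Real.exp (α * t) * Q.eval t)
      (Real.exp (α * Real.log ‖x‖) * (α * 1) * Q.eval (Real.log ‖x‖) +
        Real.exp (α * Real.log ‖x‖) * (derivative Q).eval (Real.log ‖x‖)) (Real.log ‖x‖) :=
    (((hasDerivAt_id _).const_mul α).exp).mul (Q.hasDerivAt _)
  have h1 := (he.comp_hasFDerivAt x hL).mul (bx_poly R x)
  have h2 : (fun y : EuclideanSpace ℝ (Fin 3) =>
      ‖y‖ ^ α * MvPolynomial.eval (fun i => y i) R * Q.eval (Real.log ‖y‖)) =ᶠ[nhds x]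
      (fun y => ((fun t : ℝ => Real.exp (α * t) * Q.eval t) ∘
        (fun y : EuclideanSpace ℝ (Fin 3) => Real.log ‖y‖)) y
        * MvPolynomial.eval (fun i => y i) R) := by
    filter_upwards [isOpen_ne.mem_nhds hx] with y hy
    have : 0 < ‖y‖ := norm_pos_iff.mpr hy
    simp only [Function.comp]
    rw [Real.rpow_def_of_pos this, mul_comm α]
    ring
  refine (h1.congr_of_eventuallyEq h2).congr_fderiv ?_
  have hr : Real.exp (α * Real.log ‖x‖) = ‖x‖ ^ α := by
    rw [Real.rpow_def_of_pos h0, mul_comm α]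
  have hr2 : ‖x‖ ^ (α - 2) = ‖x‖ ^ α * (‖x‖ ^ 2)⁻¹ := by
    rw [Real.rpow_sub h0, Real.rpow_two]; rfl
  ext v
  simp [hr, hr2]
  ring

open Polynomial in
lemma bx_dir (α : ℝ) (Q : ℝ[X]) (R : MvPolynomial (Fin 3) ℝ) (i : Fin 3)
    (x : EuclideanSpace ℝ (Fin 3)) (hx : x ≠ 0) :
    fderiv ℝ (fun y : EuclideanSpace ℝ (Fin 3) =>
      ‖y‖ ^ α * MvPolynomial.eval (fun i => y i) R * Q.eval (Real.log ‖y‖)) x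
        (EuclideanSpace.single i (1 : ℝ)) =
      ‖x‖ ^ (α - 2) * MvPolynomial.eval (fun i => x i) (MvPolynomial.X i * R) *
          (C α * Q + derivative Q).eval (Real.log ‖x‖)
        + ‖x‖ ^ α * MvPolynomial.eval (fun i => x i) (MvPolynomial.pderiv i R) *
          Q.eval (Real.log ‖x‖) := by
  rw [(bx_step α Q R x hx).fderiv]
  simp [Fin.sum_univ_three, EuclideanSpace.inner_single_right]
  fin_cases i <;> simp <;> ring

open Polynomial in
lemma bx_dir2 (α : ℝ) (Q : ℝ[X]) (R : MvPolynomial (Fin 3) ℝ) (i : Fin 3)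
    (x : EuclideanSpace ℝ (Fin 3)) (hx : x ≠ 0) :
    fderiv ℝ (fun z => fderiv ℝ (fun y : EuclideanSpace ℝ (Fin 3) =>
      ‖y‖ ^ α * MvPolynomial.eval (fun i => y i) R * Q.eval (Real.log ‖y‖)) z
        (EuclideanSpace.single i (1 : ℝ))) x (EuclideanSpace.single i (1 : ℝ)) =
      ‖x‖ ^ (α - 2 - 2) * (x i * (x i * MvPolynomial.eval (fun i => x i) R)) *
          (C (α - 2) * (C α * Q + derivative Q) +
            derivative (C α * Q + derivative Q)).eval (Real.log ‖x‖)
        + ‖x‖ ^ (α - 2) * (MvPolynomial.eval (fun i => x i) R +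
            2 * (x i * MvPolynomial.eval (fun i => x i) (MvPolynomial.pderiv i R))) *
          (C α * Q + derivative Q).eval (Real.log ‖x‖)
        + ‖x‖ ^ α * MvPolynomial.eval (fun i => x i)
            (MvPolynomial.pderiv i (MvPolynomial.pderiv i R)) * Q.eval (Real.log ‖x‖) := by
  have h2 : (fun z => fderiv ℝ (fun y : EuclideanSpace ℝ (Fin 3) =>
      ‖y‖ ^ α * MvPolynomial.eval (fun i => y i) R * Q.eval (Real.log ‖y‖)) z
        (EuclideanSpace.single i (1 : ℝ))) =ᶠ[nhds x]
      ((fun y : EuclideanSpace ℝ (Fin 3) =>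
        ‖y‖ ^ (α - 2) * MvPolynomial.eval (fun i => y i) (MvPolynomial.X i * R) *
          (C α * Q + derivative Q).eval (Real.log ‖y‖)) +
        fun y : EuclideanSpace ℝ (Fin 3) =>
          ‖y‖ ^ α * MvPolynomial.eval (fun i => y i) (MvPolynomial.pderiv i R) *
          Q.eval (Real.log ‖y‖)) := by
    filter_upwards [isOpen_ne.mem_nhds hx] with y hy
    rw [bx_dir α Q R i y hy]; rfl
  rw [h2.fderiv_eq, fderiv_add (bx_step _ _ _ x hx).differentiableAt
    (bx_step _ _ _ x hx).differentiableAt, _root_.add_apply,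
    bx_dir _ _ _ i x hx, bx_dir _ _ _ i x hx]
  simp only [Derivation.leibniz, MvPolynomial.pderiv_X_self, smul_eq_mul, map_mul, map_add,
    MvPolynomial.eval_X, map_one]
  ring

open Polynomial in
lemma bx_lap (J : ℕ) (a : ℝ) (P : MvPolynomial (Fin 3) ℝ) (hhom : P.IsHomogeneous J)
    (hharm : ∑ i : Fin 3, MvPolynomial.pderiv i (MvPolynomial.pderiv i P) = 0)
    (Q : ℝ[X]) (x : EuclideanSpace ℝ (Fin 3)) (hx : x ≠ 0) :
    laplacian (fun y : EuclideanSpace ℝ (Fin 3) =>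
      ‖y‖ ^ a * MvPolynomial.eval (fun i => y i) P * Q.eval (Real.log ‖y‖)) x =
    ‖x‖ ^ (a - 2) * MvPolynomial.eval (fun i => x i) P *
      (C (a * (a + 1 + 2 * J)) * Q + C (a + (a + 1 + 2 * J)) * derivative Q +
        derivative (derivative Q)).eval (Real.log ‖x‖) := by
  have h0 : 0 < ‖x‖ := norm_pos_iff.mpr hx
  unfold laplacian
  simp only [bx_dir2 a Q P _ x hx]
  have e1 := congrArg (MvPolynomial.eval (fun i => x i)) hhom.sum_X_mul_pderiv
  have e2 := congrArg (MvPolynomial.eval (fun i => x i)) hharm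
  have e3 : ‖x‖ ^ 2 = x 0 ^ 2 + x 1 ^ 2 + x 2 ^ 2 := by
    rw [EuclideanSpace.norm_sq_eq, Fin.sum_univ_three]; simp
  have e4 : ‖x‖ ^ (a - 2) = ‖x‖ ^ (a - 2 - 2) * (x 0 ^ 2 + x 1 ^ 2 + x 2 ^ 2) := by
    rw [← e3, Real.rpow_sub h0 (a - 2), Real.rpow_two]; field_simp
  simp only [Fin.sum_univ_three, map_add, map_mul, MvPolynomial.eval_X, map_zero,
    nsmul_eq_mul, map_natCast] at e1 e2 ⊢
  simp only [derivative_add, derivative_mul, derivative_C, eval_add, eval_mul, eval_C, zero_mul,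
    zero_add, eval_zero, eval_sub, C_sub, eval_natCast, eval_one, eval_ofNat, C_1, C_0] at *
  set L := Real.log ‖x‖
  set H := MvPolynomial.eval (fun i => x i) P
  linear_combination (‖x‖ ^ (a-2) * 2 * (a * Q.eval L + (derivative Q).eval L)) * e1
    + ‖x‖ ^ a * Q.eval L * e2
    - (H * ((a-2) * (a * Q.eval L + (derivative Q).eval L) +
      (a * (derivative Q).eval L + (derivative (derivative Q)).eval L))) * e4

open Polynomial in
lemma bx_single (c : ℝ) (hc : c ≠ 0) (e : ℕ → ℝ[X]) (N : ℕ) :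
    ∑ i ∈ Finset.range (N + 1), C ((-1) ^ i / c ^ (i + 1)) * (C c * e i + e (i + 1)) =
      e 0 + C ((-1) ^ N / c ^ (N + 1)) * e (N + 1) := by
  induction N with
  | zero =>
    have : (C (1 / c) * C c : ℝ[X]) = 1 := by rw [← C_mul, one_div_mul_cancel hc, C_1]
    simp only [zero_add, Finset.sum_range_one, pow_zero, pow_one]
    linear_combination e 0 * this
  | succ N ih =>
    rw [Finset.sum_range_succ, ih]
    have : (C ((-1) ^ (N + 1) / c ^ (N + 1 + 1)) * C c : ℝ[X]) =
        - C ((-1) ^ N / c ^ (N + 1)) := by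
      rw [← C_mul, ← C_neg]; congr 1; field_simp; ring
    linear_combination e (N + 1) * this

lemma bx_coef (x y : ℝ) (i : ℕ) :
    ∑ n ∈ Finset.range (i + 1 + 1), x ^ (n + 1) * y ^ (i + 1 - n + 1) =
     y * ∑ n ∈ Finset.range (i + 1), x ^ (n + 1) * y ^ (i - n + 1) + x ^ (i + 2) * y := by
  rw [Finset.sum_range_succ, Finset.mul_sum]
  congr 1
  · refine Finset.sum_congr rfl fun n hn => ?_
    have : i + 1 - n + 1 = (i - n + 1) + 1 := by
      have := Finset.mem_range.mp hn; omega
    rw [this]; ring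
  · simp

open Polynomial in
lemma bx_double (a b : ℝ) (ha : a ≠ 0) (hb : b ≠ 0) (e : ℕ → ℝ[X]) (c : ℕ → ℝ)
    (hc : ∀ i, c i = (-1) ^ i * ∑ n ∈ Finset.range (i + 1), a⁻¹ ^ (n + 1) * b⁻¹ ^ (i - n + 1))
    (N : ℕ) :
    ∑ i ∈ Finset.range (N + 1), C (c i) * (C (a * b) * e i + C (a + b) * e (i + 1) + e (i + 2)) =
      e 0 - C (a * b * c (N + 1)) * e (N + 1) + C (c N) * e (N + 2) := by
  have h0 : a * b * c 0 = 1 := by rw [hc]; simp; field_simp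
  have h1 : a * b * c 1 + (a + b) * c 0 = 0 := by
    rw [hc, hc]; simp [Finset.sum_range_succ]; field_simp; ring
  have h2 : ∀ i, a * b * c (i + 2) + (a + b) * c (i + 1) + c i = 0 := by
    intro i
    rw [hc, hc, hc, bx_coef _ _ (i + 1), bx_coef]
    set s := ∑ n ∈ Finset.range (i + 1), a⁻¹ ^ (n + 1) * b⁻¹ ^ (i - n + 1)
    simp only [pow_succ]
    field_simp
    ring
  induction N with
  | zero =>
    have h0' := congrArg (C : ℝ → ℝ[X]) h0
    have h1' := congrArg (C : ℝ → ℝ[X]) h1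
    simp only [C_mul, C_add, C_1, C_0] at h0' h1'
    simp only [zero_add, Finset.sum_range_one, C_mul, C_add]
    linear_combination e 0 * h0' + e 1 * h1'
  | succ N ih =>
    rw [Finset.sum_range_succ, ih]
    have h2' := congrArg (C : ℝ → ℝ[X]) (h2 N)
    simp only [C_mul, C_add, C_0] at h2' ⊢
    linear_combination e (N + 2) * h2'

open Polynomial in
lemma bx_eval (p i : ℕ) (hi : i ≤ p) (L : ℝ) :
    (derivative^[i] (X ^ p : ℝ[X])).eval L =
      ((p.factorial : ℝ) / ((p - i).factorial : ℝ)) * L ^ (p - i) := by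
  rw [iterate_derivative_X_pow_eq_smul, eval_smul, eval_pow, eval_X, smul_eq_mul]
  congr 1
  rw [eq_div_iff (by positivity)]
  have := Nat.factorial_mul_descFactorial hi
  rw [mul_comm]; exact_mod_cast this

open Polynomial in
lemma bx_vanish (p i : ℕ) (hi : p < i) : derivative^[i] (X ^ p : ℝ[X]) = 0 :=
  iterate_derivative_eq_zero (by simpa using hi)

/-- In spacetime dimension 3, the operator `□⁻¹` of Appendix D,
`□⁻¹[ r^d Y_{JM}(x/r)(log r)^p ] = r^{d+2} Y_{JM}(x/r)(log r)^p · D^{(p)}(d+2,J,r)`,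
is a right inverse of the Laplacian.  Writing a degree-`J` spherical harmonic as
`Y(x/r) = H(x)/r^J` with `H` the polynomial function of a harmonic homogeneous
polynomial `P` of degree `J`: in the non-resonant case `(d+2−J)(d+3+J) ≠ 0` the
function
`u(x) = ‖x‖^{d+2−J}·H(x)·∑_{i=0}^{p}∑_{n=0}^{i}(−1)^i (p!/(p−i)!) (log‖x‖)^{p−i}
  / ((d+2−J)^{n+1}(d+3+J)^{i−n+1})`
satisfies `Δu(x) = ‖x‖^{d−J}(log‖x‖)^p H(x)` for `x ≠ 0`, and in the resonant case
`d+2 = J` or `d+2 = −(J+1)` the same holds for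
`u(x) = ‖x‖^{d+2−J}·H(x)·∑_{i=0}^{p}(−1)^i (p!/(p+1−i)!) (log‖x‖)^{p+1−i}/(2d+5)^{i+1}`. -/
theorem box_inverse_is_right_inverse (J p : ℕ) (d : ℝ)
    (P : MvPolynomial (Fin 3) ℝ) (hhom : P.IsHomogeneous J)
    (hharm : ∑ i : Fin 3, MvPolynomial.pderiv i (MvPolynomial.pderiv i P) = 0) :
    ((d + 2 - (J : ℝ)) * (d + 3 + (J : ℝ)) ≠ 0 →
      ∀ x : EuclideanSpace ℝ (Fin 3), x ≠ 0 →
        laplacian (fun y =>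
            ‖y‖ ^ (d + 2 - (J : ℝ)) * MvPolynomial.eval (fun i => y i) P *
              ∑ i ∈ Finset.range (p + 1), ∑ n ∈ Finset.range (i + 1),
                (-1 : ℝ) ^ i * ((p.factorial : ℝ) / ((p - i).factorial : ℝ))
                  * Real.log ‖y‖ ^ (p - i)
                  / ((d + 2 - (J : ℝ)) ^ (n + 1) * (d + 3 + (J : ℝ)) ^ (i - n + 1))) x
          = ‖x‖ ^ (d - (J : ℝ)) * Real.log ‖x‖ ^ p
              * MvPolynomial.eval (fun i => x i) P) ∧
    ((d + 2 = (J : ℝ) ∨ d + 2 = -((J : ℝ) + 1)) →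
      ∀ x : EuclideanSpace ℝ (Fin 3), x ≠ 0 →
        laplacian (fun y =>
            ‖y‖ ^ (d + 2 - (J : ℝ)) * MvPolynomial.eval (fun i => y i) P *
              ∑ i ∈ Finset.range (p + 1),
                (-1 : ℝ) ^ i * ((p.factorial : ℝ) / ((p + 1 - i).factorial : ℝ))
                  * Real.log ‖y‖ ^ (p + 1 - i) / (2 * d + 5) ^ (i + 1)) x
          = ‖x‖ ^ (d - (J : ℝ)) * Real.log ‖x‖ ^ p
              * MvPolynomial.eval (fun i => x i) P) := by
  have ex : ∀ x : EuclideanSpace ℝ (Fin 3), ‖x‖ ^ (d + 2 - (J : ℝ) - 2) = ‖x‖ ^ (d - (J : ℝ)) := by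
    intro x; congr 1; ring
  constructor
  · intro hne x hx
    obtain ⟨ha, hb⟩ := mul_ne_zero_iff.mp hne
    obtain ⟨c, hc⟩ : ∃ c : ℕ → ℝ, ∀ i, c i = (-1) ^ i * ∑ n ∈ Finset.range (i + 1),
      (d + 2 - (J : ℝ))⁻¹ ^ (n + 1) * (d + 3 + (J : ℝ))⁻¹ ^ (i - n + 1) := ⟨_, fun _ => rfl⟩
    have key := bx_double _ _ ha hb
      (fun i => Polynomial.derivative^[i] (Polynomial.X ^ p : Polynomial ℝ)) c hc p
    have hQ := bx_lap J (d + 2 - J) P hhom hharm (∑ i ∈ Finset.range (p + 1),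
      Polynomial.C (c i) * Polynomial.derivative^[i] (Polynomial.X ^ p : Polynomial ℝ)) x hx
    have hb' : d + 2 - (J : ℝ) + 1 + 2 * J = d + 3 + J := by ring
    rw [hb', ex] at hQ
    have hpoly : Polynomial.C ((d + 2 - (J : ℝ)) * (d + 3 + J)) * (∑ i ∈ Finset.range (p + 1),
      Polynomial.C (c i) * Polynomial.derivative^[i] (Polynomial.X ^ p : Polynomial ℝ)) +
      Polynomial.C (d + 2 - (J : ℝ) + (d + 3 + J)) * Polynomial.derivative
      (∑ i ∈ Finset.range (p + 1),
      Polynomial.C (c i) * Polynomial.derivative^[i] (Polynomial.X ^ p : Polynomial ℝ)) +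
      Polynomial.derivative (Polynomial.derivative (∑ i ∈ Finset.range (p + 1),
      Polynomial.C (c i) * Polynomial.derivative^[i] (Polynomial.X ^ p : Polynomial ℝ)))
      = Polynomial.X ^ p := by
      simp only [bx_vanish p (p + 1) (by omega), bx_vanish p (p + 2) (by omega), mul_zero,
        sub_zero, add_zero, Function.iterate_zero, id] at key
      refine Eq.trans ?_ key
      simp only [Polynomial.derivative_sum, Polynomial.derivative_C_mul, Finset.mul_sum,
        ← Finset.sum_add_distrib, Function.iterate_succ_apply']
      refine Finset.sum_congr rfl fun i _ => ?_
      ring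
    rw [hpoly] at hQ
    refine Eq.trans ?_ (hQ.trans ?_)
    · congr 1
      funext y
      congr 1
      rw [Polynomial.eval_finsetSum]
      refine Finset.sum_congr rfl fun i hi => ?_
      rw [Polynomial.eval_mul, Polynomial.eval_C,
        bx_eval p i (by have := Finset.mem_range.mp hi; omega), hc, Finset.mul_sum, Finset.sum_mul]
      refine Finset.sum_congr rfl fun n _ => ?_
      rw [div_eq_mul_inv _ (_ * _), mul_inv, inv_pow, inv_pow]
      ring
    · simp; ring
  · intro hres x hx
    have hab : (d + 2 - (J : ℝ)) * (d + 3 + J) = 0 := by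
      rcases hres with h | h
      · rw [h]; ring
      · have : d + 3 + (J : ℝ) = 0 := by linarith
        rw [this, mul_zero]
    have hJ : (0 : ℝ) ≤ J := Nat.cast_nonneg J
    have hc : 2 * d + 5 ≠ 0 := by
      rcases hres with h | h
      · intro h'; linarith
      · intro h'; linarith
    set c := 2 * d + 5 with hcdef
    have key := bx_single c hc
      (fun i => Polynomial.derivative^[i] (Polynomial.X ^ p : Polynomial ℝ)) p
    -- an antiderivative of the `i`-th term
    obtain ⟨Q, hQdef⟩ : ∃ Q : Polynomial ℝ, Q = ∑ i ∈ Finset.range (p + 1),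
      Polynomial.C ((-1) ^ i / c ^ (i + 1)) * (Polynomial.C ((p + 1 : ℝ)⁻¹) *
        Polynomial.derivative^[i] (Polynomial.X ^ (p + 1) : Polynomial ℝ)) := ⟨_, rfl⟩
    have hd : Polynomial.derivative Q = ∑ i ∈ Finset.range (p + 1),
      Polynomial.C ((-1) ^ i / c ^ (i + 1)) *
        Polynomial.derivative^[i] (Polynomial.X ^ p : Polynomial ℝ) := by
      rw [hQdef]
      simp only [Polynomial.derivative_sum, Polynomial.derivative_C_mul]
      refine Finset.sum_congr rfl fun i _ => ?_
      congr 1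
      rw [← Function.iterate_succ_apply' Polynomial.derivative, Function.iterate_succ_apply,
        Polynomial.derivative_X_pow, Nat.add_sub_cancel, Polynomial.iterate_derivative_C_mul,
        ← mul_assoc, ← Polynomial.C_mul]
      have : ((p : ℝ) + 1)⁻¹ * ((p + 1 : ℕ) : ℝ) = 1 := by
        push_cast; field_simp
      rw [this, Polynomial.C_1, one_mul]
    have hQ := bx_lap J (d + 2 - J) P hhom hharm Q x hx
    have hb' : d + 2 - (J : ℝ) + 1 + 2 * J = d + 3 + J := by ring
    have hs : d + 2 - (J : ℝ) + (d + 3 + J) = c := by rw [hcdef]; ring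
    rw [hb', ex, hab, hs, Polynomial.C_0, zero_mul, zero_add] at hQ
    have hpoly : Polynomial.C c * Polynomial.derivative Q +
        Polynomial.derivative (Polynomial.derivative Q) = Polynomial.X ^ p := by
      simp only [bx_vanish p (p + 1) (by omega), mul_zero, add_zero, Function.iterate_zero,
        id] at key
      rw [← key, hd]
      simp only [Polynomial.derivative_sum, Polynomial.derivative_C_mul, Finset.mul_sum,
        ← Finset.sum_add_distrib, Function.iterate_succ_apply']
      refine Finset.sum_congr rfl fun i _ => ?_
      ring
    rw [hpoly] at hQ
    refine Eq.trans ?_ (hQ.trans ?_)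
    · congr 1
      funext y
      congr 1
      rw [hQdef, Polynomial.eval_finsetSum]
      refine Finset.sum_congr rfl fun i hi => ?_
      rw [Polynomial.eval_mul, Polynomial.eval_mul, Polynomial.eval_C, Polynomial.eval_C,
        bx_eval (p + 1) i (by have := Finset.mem_range.mp hi; omega), Nat.factorial_succ]
      push_cast
      field_simp
    · simp; ring
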